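/- Convergent expansion of an analytic germ in powers of P (Corollary 2.8): Let d ≥ 1, ℓ an injective linear form, P holomorphic in a neighborhood of 0 ∈ ℂ^d, not identically zero, with P(0) = 0, and let a ∈ ℕ^d be the ℓ-minimal exponent of the Taylor series of P at 0. Then for every f holomorphic in a neighborhood of 0 ∈ ℂ^d there exist ρ > 0 and a sequence (g_n) of bounded holomorphic functions on D(0;ρ) with ∂^β g_n(0) = 0 for every n and every β ∈ a + ℕ^d, such that the series Σ_{n=0}^∞ g_n(x)·P(x)^n converges uniformly on D(0;ρ) and its sum equals f(x) for all x ∈ D(0;ρ). -/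

import Mathlib

open Set Complex

noncomputable section

/-- Open polydisk of radius `r` centered at `0` in `ℂ^d`. -/
def polydisk (d : ℕ) (r : ℝ) : Set (Fin d → ℂ) :=
  {x | ∀ j, ‖x j‖ < r}

/-- Partial derivative in the `j`-th coordinate direction. -/
def pderivCoord {d : ℕ} (j : Fin d) (f : (Fin d → ℂ) → ℂ) : (Fin d → ℂ) → ℂ :=
  fun x => fderiv ℂ f x (Pi.single j 1)

/-- Mixed partial derivative `∂^β = ∂^{β_1}_{x_1} ⋯ ∂^{β_d}_{x_d}`. -/
def mixedPartial {d : ℕ} (β : Fin d → ℕ) (f : (Fin d → ℂ) → ℂ) : (Fin d → ℂ) → ℂ :=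
  (List.finRange d).foldr (fun j g => (pderivCoord j)^[β j] g) f

abbrev L1 (ι : Type) := lp (fun _ : ι => ℂ) 1

set_option linter.unusedSectionVars false
namespace L1
open scoped Classical

variable {ι : Type} {F : Type} [NormedAddCommGroup F] [NormedSpace ℂ F] [CompleteSpace F]

lemma hasSum_norm' (c : L1 ι) : HasSum (fun i => ‖c i‖) ‖c‖ := by
  have := lp.hasSum_norm (p := 1) (by simp) c
  simpa using this

def e (i : ι) : L1 ι := lp.single 1 i 1

lemma norm_e (i : ι) : ‖e i‖ = 1 := by
  simp [e, lp.norm_single]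

lemma e_apply (i j : ι) : e i j = if j = i then 1 else 0 := by
  simp [e, Pi.single_apply]

lemma hasSum_e (c : L1 ι) : HasSum (fun i => c i • e i) c := by
  have := lp.hasSum_single (p := 1) (by simp) c
  convert this using 2 with i
  simp [e, ← lp.single_smul]

lemma lift_summable (v : ι → F) (K : ℝ) (hv : ∀ i, ‖v i‖ ≤ K) (c : L1 ι) :
    Summable (fun i => ‖c i • v i‖) := by
  refine Summable.of_nonneg_of_le (fun _ => norm_nonneg _) (fun i => ?_)
    ((hasSum_norm' c).summable.mul_right K)
  rw [norm_smul]
  exact mul_le_mul_of_nonneg_left (hv i) (norm_nonneg _)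

def lift (v : ι → F) (K : ℝ) (hv : ∀ i, ‖v i‖ ≤ K) : L1 ι →L[ℂ] F :=
  LinearMap.mkContinuous
    { toFun := fun c => ∑' i, c i • v i
      map_add' := fun c c' => by
        rw [← Summable.tsum_add (lift_summable v K hv c).of_norm (lift_summable v K hv c').of_norm]
        simp [add_smul]
      map_smul' := fun k c => by
        simp only [RingHom.id_apply]
        rw [← (lift_summable v K hv c).of_norm.tsum_const_smul]
        simp [mul_smul] } K (fun c => by
    simp only [LinearMap.coe_mk, AddHom.coe_mk]
    refine tsum_of_norm_bounded (((hasSum_norm' c).mul_left K)) (fun i => ?_)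
    rw [norm_smul, mul_comm]
    exact mul_le_mul_of_nonneg_right (hv i) (norm_nonneg _))

lemma lift_hasSum (v : ι → F) (K : ℝ) (hv : ∀ i, ‖v i‖ ≤ K) (c : L1 ι) :
    HasSum (fun i => c i • v i) (lift v K hv c) :=
  (lift_summable v K hv c).of_norm.hasSum

lemma lift_norm (v : ι → F) (K : ℝ) (hK : 0 ≤ K) (hv : ∀ i, ‖v i‖ ≤ K) : ‖lift v K hv‖ ≤ K :=
  LinearMap.mkContinuous_norm_le _ hK _

lemma lift_e (v : ι → F) (K : ℝ) (hv : ∀ i, ‖v i‖ ≤ K) (i : ι) : lift v K hv (e i) = v i := by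
  refine (lift_hasSum v K hv (e i)).unique ?_
  convert hasSum_single i ?_ using 1
  · simp [e_apply]
  · intro j hj
    simp [e_apply, hj]

lemma ext_e {S T : L1 ι →L[ℂ] F} (h : ∀ i, S (e i) = T (e i)) : S = T := by
  ext c
  have h1 := (hasSum_e c).mapL S
  have h2 := (hasSum_e c).mapL T
  simp only [map_smul, h] at h1 h2
  exact h1.unique h2

lemma exists_of_summable (c : ι → ℂ) (hc : Summable fun i => ‖c i‖) : ∃ C : L1 ι, ∀ i, C i = c i :=
  ⟨⟨c, by
    apply memℓp_gen
    simpa using hc⟩, fun _ => rfl⟩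

end L1
namespace L1
open scoped Classical

variable {d : ℕ}

def Sh (γ : Fin d → ℕ) : L1 (Fin d → ℕ) →L[ℂ] L1 (Fin d → ℕ) :=
  lift (fun β => e (β + γ)) 1 (fun _ => (norm_e _).le)

def Mu : L1 (Fin d → ℕ) →L[ℂ] (L1 (Fin d → ℕ) →L[ℂ] L1 (Fin d → ℕ)) :=
  lift Sh 1 (fun _ => lift_norm _ _ zero_le_one _)

def Bk (a : Fin d → ℕ) : L1 (Fin d → ℕ) →L[ℂ] L1 (Fin d → ℕ) :=
  lift (fun β => if a ≤ β then e (β - a) else 0) 1 (fun β => by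
    split_ifs
    · exact (norm_e _).le
    · simp)

def coef (β : Fin d → ℕ) : L1 (Fin d → ℕ) →L[ℂ] ℂ :=
  lift (fun i => if i = β then 1 else 0) 1 (fun i => by split_ifs <;> simp)

lemma coef_apply (β : Fin d → ℕ) (c : L1 (Fin d → ℕ)) : coef β c = c β := by
  refine (lift_hasSum _ _ _ c).unique ?_
  convert hasSum_single β ?_ using 1
  · simp
  · intro j hj
    simp [hj]

lemma mono_bound (y : Fin d → ℂ) (hy : ∀ j, ‖y j‖ ≤ 1) (β : Fin d → ℕ) :
    ‖∏ j, y j ^ β j‖ ≤ 1 := by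
  rw [norm_prod]
  refine Finset.prod_le_one (fun _ _ => norm_nonneg _) (fun j _ => ?_)
  rw [norm_pow]
  exact pow_le_one₀ (norm_nonneg _) (hy j)

def ev (y : Fin d → ℂ) (hy : ∀ j, ‖y j‖ ≤ 1) : L1 (Fin d → ℕ) →L[ℂ] ℂ :=
  lift (fun β => ∏ j, y j ^ β j) 1 (mono_bound y hy)

lemma ev_e (y : Fin d → ℂ) (hy : ∀ j, ‖y j‖ ≤ 1) (β : Fin d → ℕ) :
    ev y hy (e β) = ∏ j, y j ^ β j := lift_e _ _ _ _

lemma ev_Mu (y : Fin d → ℂ) (hy : ∀ j, ‖y j‖ ≤ 1) (p c : L1 (Fin d → ℕ)) :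
    ev y hy (Mu p c) = ev y hy p * ev y hy c := by
  have : (ContinuousLinearMap.compL ℂ _ _ _ (ev y hy)).comp Mu
      = ContinuousLinearMap.smulRight (ev y hy) (ev y hy) := by
    apply ext_e
    intro γ
    apply ext_e
    intro β
    have h1 : Mu (e γ) = Sh γ := lift_e _ _ _ _
    have h2 : Sh γ (e β) = e (β + γ) := lift_e _ _ _ _
    simp [h1, h2, ev_e, pow_add, Finset.prod_mul_distrib, mul_comm]
  have := congrArg (fun T => T p c) this
  simpa using this

lemma Bk_Sh (a : Fin d → ℕ) : (Bk a).comp (Sh a) = 1 := by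
  apply ext_e
  intro β
  simp [Bk, Sh, lift_e]

lemma coef_Bk (a β : Fin d → ℕ) (c : L1 (Fin d → ℕ)) : Bk a c β = c (β + a) := by
  have : (coef β).comp (Bk a) = coef (β + a) := by
    apply ext_e
    intro γ
    by_cases h : a ≤ γ
    · have : β = γ - a ↔ β + a = γ := by
        constructor
        · rintro rfl
          exact tsub_add_cancel_of_le h
        · rintro rfl
          simp
      simp [Bk, lift_e, h, coef_apply, e_apply, this]
    · have : β + a ≠ γ := by
        rintro rfl
        exact h (le_add_of_nonneg_left (zero_le))
      simp [Bk, lift_e, h, coef_apply, e_apply, this]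
  have := congrArg (fun T => T c) this
  simpa [coef_apply] using this

theorem division (a : Fin d → ℕ) (p : L1 (Fin d → ℕ)) (hp : ‖p - p a • e a‖ < ‖p a‖) :
    ∃ Q G : L1 (Fin d → ℕ) →L[ℂ] L1 (Fin d → ℕ),
      ∀ c, (∀ β, a ≤ β → G c β = 0) ∧
        ∀ (y : Fin d → ℂ) (hy : ∀ j, ‖y j‖ ≤ 1),
          ev y hy c = ev y hy (G c) + ev y hy p * ev y hy (Q c) := by
  have hpa : p a ≠ 0 := by
    intro h
    rw [h, norm_zero] at hp
    exact absurd hp (not_lt.2 (norm_nonneg _))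
  set R := p - p a • e a with hR
  have hpR : p = p a • e a + R := by rw [hR]; abel
  have hBk : ‖Bk a‖ ≤ 1 := lift_norm _ _ zero_le_one _
  have hMu : ‖Mu R‖ ≤ ‖R‖ := by
    have := (Mu (d := d)).le_of_opNorm_le (lift_norm _ _ zero_le_one _) R
    simpa using this
  set T : L1 (Fin d → ℕ) →L[ℂ] L1 (Fin d → ℕ) := (-(p a)⁻¹) • (Bk a).comp (Mu R) with hT
  have hTn : ‖T‖ < 1 := by
    rw [hT, norm_smul, norm_neg, norm_inv]
    have h1 : ‖(Bk a).comp (Mu R)‖ ≤ ‖R‖ := by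
      refine (ContinuousLinearMap.opNorm_comp_le _ _).trans ?_
      calc ‖Bk a‖ * ‖Mu R‖ ≤ 1 * ‖R‖ := mul_le_mul hBk hMu (norm_nonneg _) zero_le_one
        _ = _ := one_mul _
    rw [inv_mul_lt_iff₀ (norm_pos_iff.2 hpa), mul_one]
    exact h1.trans_lt hp
  have hU : (Bk a).comp (Mu p) = p a • (1 - T) := by
    rw [hpR, map_add, map_smul, ContinuousLinearMap.comp_add, ContinuousLinearMap.comp_smul,
      ← hpR]
    have : Mu (e a) = Sh a := lift_e _ _ _ _
    rw [this, Bk_Sh, hT, smul_sub, smul_smul]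
    simp [hpa]
  obtain ⟨V, hV⟩ := isUnit_one_sub_of_norm_lt_one hTn
  set W : L1 (Fin d → ℕ) →L[ℂ] L1 (Fin d → ℕ) := ((V⁻¹ : Units _) : L1 (Fin d → ℕ) →L[ℂ] L1 (Fin d → ℕ))
  have hVW : (1 - T) * W = 1 := by rw [← hV]; exact V.mul_inv
  set Q := (p a)⁻¹ • (W.comp (Bk a)) with hQ
  refine ⟨Q, 1 - (Mu p).comp Q, fun c => ⟨?_, ?_⟩⟩
  · intro β hβ
    have h0 : Bk a ((1 - (Mu p).comp Q) c) = 0 := by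
      have : Bk a (Mu p (Q c)) = Bk a c := by
        have h2 := congrArg (fun S => S (Q c)) hU
        simp only [ContinuousLinearMap.comp_apply] at h2
        rw [h2, hQ]
        have h3 := congrArg (fun S => S (Bk a c)) hVW
        simp only [mul_apply_eq_comp] at h3
        simp only [_root_.smul_apply, ContinuousLinearMap.comp_apply, map_smul]
        rw [smul_smul, inv_mul_cancel₀ hpa, one_smul, h3]
        rfl
      simp [this]
    have := coef_Bk a (β - a) ((1 - (Mu p).comp Q) c)
    rw [h0, tsub_add_cancel_of_le hβ] at this
    rw [← this]
    rfl
  · intro y hy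
    rw [← ev_Mu, ← map_add]
    simp

theorem expansion (a : Fin d → ℕ) (p : L1 (Fin d → ℕ)) (hp : ‖p - p a • e a‖ < ‖p a‖)
    (c : L1 (Fin d → ℕ)) :
    ∃ (G : ℕ → L1 (Fin d → ℕ)) (K : ℝ), 0 ≤ K ∧ (∀ n β, a ≤ β → G n β = 0) ∧
      ∀ (y : Fin d → ℂ) (hy : ∀ j, ‖y j‖ ≤ 1) (N : ℕ),
        ‖ev y hy c - ∑ n ∈ Finset.range N, ev y hy (G n) * ev y hy p ^ n‖
          ≤ ‖c‖ * (‖ev y hy p‖ * K) ^ N := by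
  obtain ⟨Q, G, h⟩ := division a p hp
  refine ⟨fun n => G ((Q ^ n) c), ‖Q‖, norm_nonneg _, fun n => (h _).1, ?_⟩
  intro y hy N
  have h1 : ∀ N, ev y hy c - ∑ n ∈ Finset.range N, ev y hy (G ((Q ^ n) c)) * ev y hy p ^ n
      = ev y hy p ^ N * ev y hy ((Q ^ N) c) := by
    intro N
    induction N with
    | zero => simp
    | succ N ih =>
      rw [Finset.sum_range_succ, ← sub_sub, ih, pow_succ' Q, mul_apply_eq_comp,
        (h ((Q ^ N) c)).2 y hy]
      ring
  rw [h1, norm_mul, norm_pow, mul_pow]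
  have h2 : ‖ev y hy ((Q ^ N) c)‖ ≤ ‖Q‖ ^ N * ‖c‖ := by
    have := (ev y hy).le_of_opNorm_le (lift_norm _ _ zero_le_one _) ((Q ^ N) c)
    rw [one_mul] at this
    refine this.trans ?_
    clear this h1
    induction N with
    | zero => simp
    | succ N ih =>
      rw [pow_succ' Q, mul_apply_eq_comp]
      refine (Q.le_opNorm _).trans ?_
      rw [pow_succ', mul_assoc]
      exact mul_le_mul_of_nonneg_left ih (norm_nonneg _)
  calc _ ≤ ‖ev y hy p‖ ^ N * (‖Q‖ ^ N * ‖c‖) := mul_le_mul_of_nonneg_left h2 (by positivity)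
    _ = _ := by ring

end L1
section expan
variable {d : ℕ}

lemma hasSum_of_eq {ι : Type} {f g : ι → ℂ} {a : ℂ} (h : ∀ i, f i = g i) (hg : HasSum g a) :
    HasSum f a := by
  rwa [funext h]

def HasExp (F : (Fin d → ℂ) → ℂ) (h : (Fin d → ℕ) → ℂ) (s : ℝ) : Prop :=
  0 < s ∧ Summable (fun β => ‖h β‖ * s ^ (∑ j, β j)) ∧
    ∀ x : Fin d → ℂ, ‖x‖ < s → HasSum (fun β => h β * ∏ j, x j ^ β j) (F x)

lemma mono_le (x : Fin d → ℂ) (s : ℝ) (hx : ∀ j, ‖x j‖ ≤ s) (β : Fin d → ℕ) :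
    ‖∏ j, x j ^ β j‖ ≤ s ^ (∑ j, β j) := by
  rw [norm_prod, ← Finset.prod_pow_eq_pow_sum]
  refine Finset.prod_le_prod (fun _ _ => norm_nonneg _) (fun j _ => ?_)
  rw [norm_pow]
  exact pow_le_pow_left₀ (norm_nonneg _) (hx j) _

lemma exists_multilin (n : ℕ) (β : Fin d → ℕ) :
    ∃ m : ContinuousMultilinearMap ℂ (fun _ : Fin n => (Fin d → ℂ)) ℂ, ‖m‖ ≤ 1 ∧
      (∑ j, β j = n → ∀ x : Fin d → ℂ, m (fun _ => x) = ∏ j, x j ^ β j) := by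
  by_cases hn : ∑ j, β j = n
  · obtain ⟨l, hl⟩ := Quot.exists_rep (∑ j, (β j) • ({j} : Multiset (Fin d)) : Multiset (Fin d))
    have hl' : (l : Multiset (Fin d)) = ∑ j, (β j) • ({j} : Multiset (Fin d)) := hl
    have hlen : l.length = n := by
      rw [← Multiset.coe_card, hl', Multiset.card_sum]
      simpa using hn
    subst hlen
    refine ⟨(ContinuousMultilinearMap.mkPiAlgebraFin ℂ l.length ℂ).compContinuousLinearMap
      (fun i => ContinuousLinearMap.proj (l.get i)), ?_, ?_⟩
    · refine ContinuousMultilinearMap.opNorm_le_bound zero_le_one (fun v => ?_)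
      simp only [ContinuousMultilinearMap.compContinuousLinearMap_apply,
        ContinuousMultilinearMap.mkPiAlgebraFin_apply, List.prod_ofFn, norm_prod, one_mul]
      exact Finset.prod_le_prod (fun _ _ => norm_nonneg _) (fun i _ => norm_le_pi_norm (v i) _)
    · intro _ x
      simp only [ContinuousMultilinearMap.compContinuousLinearMap_apply,
        ContinuousMultilinearMap.mkPiAlgebraFin_apply, List.prod_ofFn,
        ContinuousLinearMap.proj_apply, List.get_eq_getElem]
      rw [Fin.prod_univ_fun_getElem l x, ← Multiset.prod_coe, ← Multiset.map_coe, hl']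
      rw [← Multiset.coe_mapAddMonoidHom, map_sum, Multiset.prod_sum]
      simp [Multiset.map_nsmul, Multiset.prod_nsmul]
  · exact ⟨0, by simp, fun h => absurd h hn⟩

lemma HasExp.analytic {F : (Fin d → ℂ) → ℂ} {h : (Fin d → ℕ) → ℂ} {s : ℝ} (H : HasExp F h s) :
    AnalyticOnNhd ℂ F (Metric.ball 0 s) := by
  obtain ⟨hs, hsum, hF⟩ := H
  choose m hm1 hm2 using exists_multilin (d := d)
  let p : FormalMultilinearSeries ℂ (Fin d → ℂ) ℂ := fun n =>
    ∑ β ∈ Finset.piAntidiag Finset.univ n, h β • m n β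
  have hp : HasFPowerSeriesOnBall F p 0 (ENNReal.ofReal s) := by
    refine ⟨?_, by simpa using hs, ?_⟩
    · refine p.le_radius_of_bound (∑' β, ‖h β‖ * s ^ (∑ j, β j)) (fun n => ?_)
      rw [Real.coe_toNNReal _ hs.le]
      have h1 : ‖p n‖ ≤ ∑ β ∈ Finset.piAntidiag Finset.univ n, ‖h β‖ := by
        refine (norm_sum_le _ _).trans (Finset.sum_le_sum fun β _ => ?_)
        rw [norm_smul]
        exact mul_le_of_le_one_right (norm_nonneg _) (hm1 _ _)
      calc ‖p n‖ * s ^ n ≤ (∑ β ∈ Finset.piAntidiag Finset.univ n, ‖h β‖) * s ^ n :=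
            mul_le_mul_of_nonneg_right h1 (by positivity)
        _ = ∑ β ∈ Finset.piAntidiag Finset.univ n, ‖h β‖ * s ^ (∑ j, β j) := by
            rw [Finset.sum_mul]
            refine Finset.sum_congr rfl fun β hβ => ?_
            rw [(Finset.mem_piAntidiag.1 hβ).1]
        _ ≤ _ := hsum.sum_le_tsum _ (fun _ _ => by positivity)
    · intro y hy
      rw [Metric.eball_ofReal, mem_ball_zero_iff] at hy
      rw [zero_add]
      have h1 := (hF y hy).tsum_fiberwise (fun β : Fin d → ℕ => ∑ j, β j)
      convert h1 using 2 with n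
      have h2 : ((fun β : Fin d → ℕ => ∑ j, β j) ⁻¹' {n})
          = ((Finset.piAntidiag Finset.univ n : Finset (Fin d → ℕ)) : Set (Fin d → ℕ)) := by
        ext β
        simp [Finset.mem_piAntidiag]
      rw [h2, Finset.tsum_subtype' (Finset.piAntidiag Finset.univ n)
        (fun β => h β * ∏ j, y j ^ β j)]
      simp only [p, _root_.sum_apply]
      refine Finset.sum_congr rfl fun β hβ => ?_
      rw [_root_.smul_apply, hm2 n β (Finset.mem_piAntidiag.1 hβ).1, smul_eq_mul]
  have := hp.analyticOnNhd
  rwa [Metric.eball_ofReal] at this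

lemma HasExp.pderiv {F : (Fin d → ℂ) → ℂ} {h : (Fin d → ℕ) → ℂ} {s : ℝ} (H : HasExp F h s)
    (j : Fin d) :
    HasExp (pderivCoord j F) (fun β => ((β j : ℂ) + 1) * h (β + Pi.single j 1)) (s / 2) := by
  have hA := H.analytic
  obtain ⟨hs, hsum, hF⟩ := H
  have hinj : Function.Injective (fun β : Fin d → ℕ => β + Pi.single j 1) :=
    fun a b hab => add_right_cancel hab
  refine ⟨by positivity, ?_, ?_⟩
  · have h1 : Summable (fun β : Fin d → ℕ => s⁻¹ *
        (‖h (β + Pi.single j 1)‖ * s ^ (∑ i, (β + Pi.single j 1 : Fin d → ℕ) i))) :=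
      (hsum.comp_injective hinj).mul_left _
    refine Summable.of_nonneg_of_le (fun β => by positivity) (fun β => ?_) h1
    have h2 : ∑ i, (β + Pi.single j 1 : Fin d → ℕ) i = ∑ i, β i + 1 := by
      simp [Finset.sum_add_distrib]
    rw [h2, norm_mul, pow_succ]
    have h3 : ‖(β j : ℂ) + 1‖ ≤ 2 ^ (∑ i, β i) := by
      have : ‖(β j : ℂ) + 1‖ = ((β j + 1 : ℕ) : ℝ) := by
        rw [← Nat.cast_add_one, Complex.norm_natCast]
      rw [this]
      have h4 : β j ≤ ∑ i, β i := Finset.single_le_sum (f := β) (fun _ _ => Nat.zero_le _) (Finset.mem_univ j)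
      have h5 : β j + 1 ≤ 2 ^ (∑ i, β i) := by
        have := Nat.lt_two_pow_self (n := ∑ i, β i)
        omega
      exact_mod_cast h5
    calc ‖(β j : ℂ) + 1‖ * ‖h (β + Pi.single j 1)‖ * (s / 2) ^ ∑ i, β i
        ≤ 2 ^ (∑ i, β i) * ‖h (β + Pi.single j 1)‖ * (s / 2) ^ ∑ i, β i := by gcongr
      _ = s⁻¹ * (‖h (β + Pi.single j 1)‖ * (s ^ (∑ i, β i) * s)) := by
        rw [div_pow]
        field_simp
  · intro x hx
    have hxs : ‖x‖ < s := by linarith [norm_nonneg x]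
    have hxi : ∀ i, ‖x i‖ < s := fun i => (norm_le_pi_norm x i).trans_lt hxs
    have hup : ∀ w ∈ Metric.ball (0 : ℂ) s, ‖Function.update x j w‖ < s := by
      intro w hw
      rw [pi_norm_lt_iff hs]
      intro i
      by_cases hi : i = j
      · subst hi; simpa using hw
      · simpa [hi] using hxi i
    have hprod : ∀ (w : ℂ) (β : Fin d → ℕ), ∏ i, Function.update x j w i ^ β i
        = w ^ β j * ∏ i ∈ Finset.univ.erase j, x i ^ β i := by
      intro w β
      rw [← Finset.mul_prod_erase _ _ (Finset.mem_univ j)]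
      simp only [Function.update_self]
      congr 1
      refine Finset.prod_congr rfl fun i hi => ?_
      rw [Function.update_of_ne (Finset.ne_of_mem_erase hi)]
    have hxj : x j ∈ Metric.ball (0 : ℂ) s := by simpa using hxi j
    have key := Complex.hasSum_deriv_of_summable_norm (U := Metric.ball (0 : ℂ) s) (z := x j)
      (F := fun β w => h β * ∏ i, Function.update x j w i ^ β i) hsum
      (fun β => by
        simp only [hprod]
        fun_prop) Metric.isOpen_ball
      (fun β w hw => by
        rw [norm_mul]
        refine mul_le_mul_of_nonneg_left ?_ (norm_nonneg _)
        exact mono_le _ _ (fun i => ((norm_le_pi_norm _ i).trans_lt (hup w hw)).le) β) hxj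
    have hd1 : deriv (fun w => ∑' β, h β * ∏ i, Function.update x j w i ^ β i) (x j)
        = pderivCoord j F x := by
      have he : (fun w => ∑' β, h β * ∏ i, Function.update x j w i ^ β i)
          =ᶠ[nhds (x j)] (fun w => F (Function.update x j w)) := by
        filter_upwards [Metric.isOpen_ball.mem_nhds hxj] with w hw
        exact (hF _ (hup w hw)).tsum_eq
      rw [he.deriv_eq]
      have hFd : HasFDerivAt F (fderiv ℂ F x) (Function.update x j (x j)) := by
        rw [Function.update_eq_self]
        exact ((hA x (by simpa using hxs)).differentiableAt).hasFDerivAt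
      exact (hFd.comp_hasDerivAt (x j) (hasDerivAt_update x j (x j))).deriv
    rw [hd1] at key
    have hd2 : ∀ β : Fin d → ℕ, deriv (fun w => h β * ∏ i, Function.update x j w i ^ β i) (x j)
        = h β * (β j * x j ^ (β j - 1) * ∏ i ∈ Finset.univ.erase j, x i ^ β i) := by
      intro β
      simp only [hprod]
      rw [deriv_const_mul _ (by fun_prop), deriv_mul_const (by fun_prop)]
      simp
    simp only [hd2] at key
    rw [← hinj.hasSum_iff] at key
    · refine hasSum_of_eq (fun β => ?_) key
      rw [← Finset.mul_prod_erase _ _ (Finset.mem_univ j), Function.comp_apply]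
      have : ∏ i ∈ Finset.univ.erase j, x i ^ (β + Pi.single j 1 : Fin d → ℕ) i
          = ∏ i ∈ Finset.univ.erase j, x i ^ β i := by
        refine Finset.prod_congr rfl fun i hi => ?_
        simp [Finset.ne_of_mem_erase hi]
      rw [this]
      simp
      ring
    · intro β hβ
      have : β j = 0 := by
        by_contra h0
        apply hβ
        refine ⟨β - Pi.single j 1, ?_⟩
        apply tsub_add_cancel_of_le
        intro i
        by_cases hi : i = j
        · subst hi; simp; omega
        · simp [hi]
      simp [this]

lemma HasExp.pderiv_iter {F : (Fin d → ℂ) → ℂ} {h : (Fin d → ℕ) → ℂ} {s : ℝ} (H : HasExp F h s)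
    (j : Fin d) (k : ℕ) :
    ∃ h' s', HasExp ((pderivCoord j)^[k] F) h' s' ∧
      ∀ γ, ∃ C : ℂ, C ≠ 0 ∧ h' γ = C * h (γ + Pi.single j k) := by
  induction k with
  | zero => exact ⟨h, s, H, fun γ => ⟨1, one_ne_zero, by simp⟩⟩
  | succ k ih =>
    obtain ⟨h', s', H', hC⟩ := ih
    rw [Function.iterate_succ_apply']
    refine ⟨_, _, H'.pderiv j, fun γ => ?_⟩
    obtain ⟨C, hC0, hC1⟩ := hC (γ + Pi.single j 1)
    refine ⟨((γ j : ℂ) + 1) * C, mul_ne_zero (Nat.cast_add_one_ne_zero _) hC0, ?_⟩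
    rw [hC1, add_assoc, ← Pi.single_add, add_comm 1 k, mul_assoc]

lemma HasExp.foldr {F : (Fin d → ℂ) → ℂ} {h : (Fin d → ℕ) → ℂ} {s : ℝ} (H : HasExp F h s)
    (β : Fin d → ℕ) (l : List (Fin d)) :
    ∃ h' s', HasExp (l.foldr (fun j g => (pderivCoord j)^[β j] g) F) h' s' ∧
      ∀ γ, ∃ C : ℂ, C ≠ 0 ∧ h' γ = C * h (γ + (l.map (fun j => Pi.single j (β j))).sum) := by
  induction l with
  | nil => exact ⟨h, s, H, fun γ => ⟨1, one_ne_zero, by simp⟩⟩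
  | cons j l ih =>
    obtain ⟨h', s', H', hC⟩ := ih
    obtain ⟨h2, s2, H2, hC2⟩ := H'.pderiv_iter j (β j)
    refine ⟨h2, s2, H2, fun γ => ?_⟩
    obtain ⟨C2, hC20, hC21⟩ := hC2 γ
    obtain ⟨C, hC0, hC1⟩ := hC (γ + Pi.single j (β j))
    refine ⟨C2 * C, mul_ne_zero hC20 hC0, ?_⟩
    rw [hC21, hC1, List.map_cons, List.sum_cons, add_assoc, mul_assoc]

lemma HasExp.mixed {F : (Fin d → ℂ) → ℂ} {h : (Fin d → ℕ) → ℂ} {s : ℝ} (H : HasExp F h s)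
    (β : Fin d → ℕ) : ∃ C : ℂ, C ≠ 0 ∧ mixedPartial β F 0 = C * h β := by
  obtain ⟨h', s', H', hC⟩ := H.foldr β (List.finRange d)
  obtain ⟨C, hC0, hC1⟩ := hC 0
  refine ⟨C, hC0, ?_⟩
  have h1 : ((List.finRange d).map (fun j => (Pi.single j (β j) : Fin d → ℕ))).sum = β := by
    rw [← List.ofFn_eq_map, List.sum_ofFn]
    exact Finset.univ_sum_single β
  rw [h1, zero_add] at hC1
  rw [← hC1]
  have h2 := H'.2.2 0 (by simpa using H'.1)
  refine h2.unique ?_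
  have h3 := hasSum_single (f := fun γ : Fin d → ℕ => h' γ * ∏ j, (0 : Fin d → ℂ) j ^ γ j) 0 ?_
  · simpa using h3
  · intro γ hγ
    obtain ⟨j, hj⟩ := Function.ne_iff.1 hγ
    rw [Finset.prod_eq_zero (Finset.mem_univ j), mul_zero]
    simpa using hj

end expan
section expan2
variable {d : ℕ}

lemma exists_hasExp (F : (Fin d → ℂ) → ℂ) (hF : AnalyticAt ℂ F 0) :
    ∃ h s, HasExp F h s := by
  obtain ⟨p, r, hp⟩ := hF
  obtain ⟨q, hq0, hqr⟩ := ENNReal.lt_iff_exists_nnreal_btwn.1 hp.r_pos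
  have hq0' : (0 : ℝ) < q := by exact_mod_cast hq0
  obtain ⟨C, hC0, hC⟩ := p.norm_mul_pow_le_of_lt_radius (hqr.trans_le hp.r_le)
  set s : ℝ := q / (2 * (d + 1)) with hs
  have hs0 : 0 < s := by positivity
  have hsq : s ≤ q := by
    rw [hs]
    apply div_le_self hq0'.le
    have : (0 : ℝ) ≤ d := by positivity
    linarith
  let τ : (Σ n : ℕ, (Fin n → Fin d)) → (Fin d → ℕ) := fun σ => ∑ i, Pi.single (σ.2 i) 1
  let u : (Σ n : ℕ, (Fin n → Fin d)) → ℂ := fun σ =>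
    p σ.1 (fun i => Pi.single (σ.2 i) 1)
  have hτ : ∀ (x : Fin d → ℂ) (σ), ∏ j, x j ^ (τ σ j) = ∏ i, x (σ.2 i) := by
    intro x σ
    simp only [τ, Finset.sum_apply, ← Finset.prod_pow_eq_pow_sum]
    rw [Finset.prod_comm]
    refine Finset.prod_congr rfl fun i _ => ?_
    rw [Finset.prod_eq_single (σ.2 i)]
    · simp
    · intro j _ hj
      simp [hj]
    · simp
  have hu : ∀ σ, ‖u σ‖ ≤ ‖p σ.1‖ := by
    intro σ
    refine ((p σ.1).le_opNorm _).trans (mul_le_of_le_one_right (norm_nonneg _) ?_)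
    refine Finset.prod_le_one (fun _ _ => norm_nonneg _) (fun i _ => ?_)
    rw [pi_norm_le_iff_of_nonneg zero_le_one]
    intro k
    rw [Pi.single_apply]
    split_ifs <;> simp
  have hsumm : Summable (fun σ => ‖u σ‖ * s ^ σ.1) := by
    rw [summable_sigma_of_nonneg (fun σ => by positivity)]
    refine ⟨fun n => Summable.of_finite, ?_⟩
    refine Summable.of_nonneg_of_le (fun n => tsum_nonneg fun _ => by positivity) (fun n => ?_)
      ((summable_geometric_of_lt_one (r := (1 / 2 : ℝ)) (by norm_num) (by norm_num)).mul_left C)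
    rw [tsum_fintype]
    calc ∑ b : Fin n → Fin d, ‖u ⟨n, b⟩‖ * s ^ n ≤ ∑ b : Fin n → Fin d, ‖p n‖ * s ^ n :=
          Finset.sum_le_sum fun b _ => mul_le_mul_of_nonneg_right (hu ⟨n, b⟩) (by positivity)
      _ = ‖p n‖ * ((d : ℝ) * s) ^ n := by
          simp [mul_pow]; ring
      _ ≤ ‖p n‖ * (q * (1 / 2)) ^ n := by
          have : (d : ℝ) * s ≤ q * (1 / 2) := by
            rw [hs]
            field_simp
            linarith
          gcongr
      _ = (‖p n‖ * q ^ n) * (1 / 2) ^ n := by rw [mul_pow]; ring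
      _ ≤ C * (1 / 2) ^ n := by gcongr; exact hC n
  have hcs : Summable (fun σ => (u σ * (s : ℂ) ^ σ.1) • L1.e (τ σ)) := by
    apply Summable.of_norm
    simpa [norm_smul, L1.norm_e, abs_of_pos hs0] using hsumm
  obtain ⟨c, hc⟩ := hcs
  have hsc : (s : ℂ) ≠ 0 := by exact_mod_cast hs0.ne'
  refine ⟨fun β => c β / (s : ℂ) ^ (∑ j, β j), s, hs0, ?_, ?_⟩
  · refine (L1.hasSum_norm' c).summable.congr fun β => ?_
    rw [norm_div, norm_pow, Complex.norm_real, Real.norm_of_nonneg hs0.le]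
    field_simp
  · intro x hx
    set y : Fin d → ℂ := fun j => x j / s with hy
    have hy1 : ∀ j, ‖y j‖ ≤ 1 := by
      intro j
      rw [hy]
      simp only [norm_div, Complex.norm_real, Real.norm_of_nonneg hs0.le]
      rw [div_le_one hs0]
      exact (norm_le_pi_norm x j).trans hx.le
    have h1 : HasSum (fun σ => u σ * ∏ i, x (σ.2 i)) (L1.ev y hy1 c) := by
      convert hc.mapL (L1.ev y hy1) using 2 with σ
      rw [map_smul, L1.ev_e, hτ, hy]
      simp only [Finset.prod_div_distrib]
      simp
      field_simp
    have h2 : HasSum (fun n => p n (fun _ => x)) (L1.ev y hy1 c) := by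
      convert h1.sigma (fun n => hasSum_fintype _) using 2 with n
      have hx1 : x = ∑ j, x j • (Pi.single j 1 : Fin d → ℂ) := by
        ext k
        simp [Finset.sum_apply, Pi.single_apply]
      conv_lhs => rw [hx1]
      rw [(p n).map_sum (fun (_ : Fin n) j => x j • (Pi.single j 1 : Fin d → ℂ))]
      refine Finset.sum_congr rfl fun b _ => ?_
      rw [(p n).map_smul_univ (fun i => x (b i)) (fun i => Pi.single (b i) 1), smul_eq_mul, mul_comm]
    have h3 : F x = L1.ev y hy1 c := by
      have := hp.hasSum (y := x) (by
        rw [Metric.mem_eball, edist_zero_right]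
        refine lt_trans ?_ hqr
        rw [enorm_eq_nnnorm, ENNReal.coe_lt_coe, ← NNReal.coe_lt_coe]
        exact hx.trans_le hsq)
      rw [zero_add] at this
      exact this.unique h2
    rw [h3]
    refine hasSum_of_eq (fun β => ?_) (L1.lift_hasSum _ _ _ c)
    rw [hy]
    simp only [div_pow, Finset.prod_div_distrib, Finset.prod_pow_eq_pow_sum, smul_eq_mul]
    ring

end expan2
section final
open Filter Topology
variable {d : ℕ}

lemma ev_eq {F : (Fin d → ℂ) → ℂ} {h : (Fin d → ℕ) → ℂ} {s : ℝ} (H : HasExp F h s)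
    (r : Fin d → ℝ) (hr : ∀ j, 0 < r j) (p : L1 (Fin d → ℕ))
    (hp : ∀ β, p β = h β * ((∏ j, r j ^ β j : ℝ) : ℂ)) (x : Fin d → ℂ) (hx : ‖x‖ < s)
    (hy : ∀ j, ‖x j / (r j : ℂ)‖ ≤ 1) :
    L1.ev (fun j => x j / (r j : ℂ)) hy p = F x := by
  refine (L1.lift_hasSum _ _ _ p).unique (hasSum_of_eq (fun β => ?_) (H.2.2 x hx))
  have : ((∏ j, r j ^ β j : ℝ) : ℂ) ≠ 0 := by
    exact_mod_cast (Finset.prod_pos fun j _ => pow_pos (hr j) _).ne'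
  rw [hp, smul_eq_mul]
  simp only [div_pow, Finset.prod_div_distrib]
  push_cast at this ⊢
  field_simp

lemma hasExp_ev (r : Fin d → ℝ) (hr : ∀ j, 0 < r j) (G : L1 (Fin d → ℕ)) (ρ : ℝ) (hρ : 0 < ρ)
    (hρr : ∀ j, ρ ≤ r j) :
    HasExp (fun x => ∑' β, G β * ∏ j, (x j / (r j : ℂ)) ^ β j)
      (fun β => G β / ((∏ j, r j ^ β j : ℝ) : ℂ)) ρ := by
  have hpos : ∀ β : Fin d → ℕ, 0 < ∏ j, r j ^ β j :=
    fun β => Finset.prod_pos fun j _ => pow_pos (hr j) _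
  refine ⟨hρ, ?_, ?_⟩
  · refine Summable.of_nonneg_of_le (fun β => by positivity) (fun β => ?_)
      (L1.hasSum_norm' G).summable
    rw [norm_div, Complex.norm_real, Real.norm_of_nonneg (hpos β).le, div_mul_eq_mul_div,
      div_le_iff₀ (hpos β)]
    refine mul_le_mul_of_nonneg_left ?_ (norm_nonneg _)
    rw [← Finset.prod_pow_eq_pow_sum]
    exact Finset.prod_le_prod (fun _ _ => by positivity)
      (fun j _ => pow_le_pow_left₀ hρ.le (hρr j) _)
  · intro x hx
    have hy : ∀ j, ‖x j / (r j : ℂ)‖ ≤ 1 := by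
      intro j
      rw [norm_div, Complex.norm_real, Real.norm_of_nonneg (hr j).le, div_le_one (hr j)]
      exact ((norm_le_pi_norm x j).trans hx.le).trans (hρr j)
    refine hasSum_of_eq (fun β => ?_) (L1.lift_hasSum _ _ (L1.mono_bound _ hy) G)
    rw [smul_eq_mul]
    simp only [div_pow, Finset.prod_div_distrib]
    push_cast
    ring

lemma polydisk_eq (ρ : ℝ) (hρ : 0 < ρ) : polydisk d ρ = Metric.ball 0 ρ := by
  ext x
  rw [mem_ball_zero_iff, pi_norm_lt_iff hρ]
  rfl

lemma weights (ℓ : Fin d → ℝ) (t : ℝ) (ht : 0 < t) (β : Fin d → ℕ) :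
    ∏ j, (t ^ ℓ j) ^ β j = t ^ (∑ j, ℓ j * (β j : ℝ)) := by
  rw [Real.rpow_sum_of_pos ht]
  refine Finset.prod_congr rfl fun j _ => ?_
  rw [Real.rpow_mul ht.le, Real.rpow_natCast]

lemma rpow_tendsto (α : ℝ) (hα : 0 < α) : Tendsto (fun t : ℝ => t ^ α) (𝓝[>] 0) (𝓝 0) := by
  have := (Real.continuousAt_rpow_const 0 α (Or.inr hα.le)).tendsto
  rw [Real.zero_rpow hα.ne'] at this
  exact this.mono_left nhdsWithin_le_nhds

lemma summable_weights (ℓ : Fin d → ℝ) (t s : ℝ) (ht : 0 < t) (hts : ∀ j, t ^ ℓ j ≤ s)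
    (h : (Fin d → ℕ) → ℂ) (hsum : Summable (fun β => ‖h β‖ * s ^ (∑ j, β j))) :
    Summable (fun β => ‖h β‖ * ∏ j, (t ^ ℓ j) ^ β j) := by
  refine Summable.of_nonneg_of_le (fun β => by positivity) (fun β => ?_) hsum
  refine mul_le_mul_of_nonneg_left ?_ (norm_nonneg _)
  rw [← Finset.prod_pow_eq_pow_sum]
  exact Finset.prod_le_prod (fun _ _ => by positivity)
      (fun j _ => pow_le_pow_left₀ (by positivity) (hts j) _)

lemma choose_t (ℓ : Fin d → ℝ) (hℓpos : ∀ j, 0 < ℓ j) (s : ℝ) (hs : 0 < s)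
    (h : (Fin d → ℕ) → ℂ) (hsum : Summable (fun β => ‖h β‖ * s ^ (∑ j, β j)))
    (a : Fin d → ℕ) (ha : h a ≠ 0)
    (hamin : ∀ β : Fin d → ℕ, h β ≠ 0 → β ≠ a →
      ∑ j, ℓ j * (a j : ℝ) < ∑ j, ℓ j * (β j : ℝ)) (s' : ℝ) (hs' : 0 < s') :
    ∃ t : ℝ, 0 < t ∧ (∀ j, t ^ ℓ j ≤ s) ∧ (∀ j, t ^ ℓ j ≤ s') ∧
      ∑' β, (if β = a then 0 else ‖h β‖ * t ^ (∑ j, ℓ j * (β j : ℝ) - ∑ j, ℓ j * (a j : ℝ)))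
        < ‖h a‖ := by
  have hev : ∀ u : ℝ, 0 < u → ∀ᶠ t : ℝ in 𝓝[>] 0, ∀ j, t ^ ℓ j ≤ u := by
    intro u hu
    rw [eventually_all]
    intro j
    filter_upwards [(rpow_tendsto (ℓ j) (hℓpos j)).eventually (gt_mem_nhds hu)] with t ht
    exact ht.le
  have hpos : ∀ᶠ t : ℝ in 𝓝[>] 0, 0 < t := self_mem_nhdsWithin
  obtain ⟨t0, ht0, ht0s⟩ := (hpos.and (hev s hs)).exists
  have hdom := tendsto_tsum_of_dominated_convergence (𝓕 := 𝓝[>] (0 : ℝ))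
    (f := fun t (β : Fin d → ℕ) => if β = a then 0 else
      ‖h β‖ * t ^ (∑ j, ℓ j * (β j : ℝ) - ∑ j, ℓ j * (a j : ℝ)))
    (g := fun _ => (0 : ℝ))
    (bound := fun β => (‖h β‖ * ∏ j, (t0 ^ ℓ j) ^ β j) * t0 ^ (-∑ j, ℓ j * (a j : ℝ)))
    ((summable_weights ℓ t0 s ht0 ht0s h hsum).mul_right _)
    (by
      intro β
      by_cases hβ : β = a
      · simp [hβ]
      by_cases hh : h β = 0
      · simp [hh]
      simp only [hβ, if_false]
      have := (rpow_tendsto _ (sub_pos.2 (hamin β hh hβ))).const_mul ‖h β‖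
      simpa using this)
    (by
      filter_upwards [hpos, (gt_mem_nhds ht0).filter_mono nhdsWithin_le_nhds] with t ht htt
      intro β
      by_cases hβ : β = a
      · simp only [hβ, if_true, norm_zero]
        positivity
      by_cases hh : h β = 0
      · simp [hh]
      simp only [hβ, if_false]
      rw [norm_mul, norm_norm, weights ℓ t0 ht0, mul_assoc, ← Real.rpow_add ht0,
        ← sub_eq_add_neg, Real.norm_of_nonneg (by positivity)]
      refine mul_le_mul_of_nonneg_left ?_ (norm_nonneg _)
      exact Real.rpow_le_rpow ht.le htt.le (sub_pos.2 (hamin β hh hβ)).le)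
  rw [tsum_zero] at hdom
  have h3 := hdom.eventually (gt_mem_nhds (norm_pos_iff.2 ha))
  obtain ⟨t, h1, h2, h3, h4⟩ := (hpos.and ((hev s hs).and ((hev s' hs').and h3))).exists
  exact ⟨t, h1, h2, h3, h4⟩

end final

/-- **Convergent expansion of an analytic germ in powers of `P`** (Corollary 2.8).
With `ℓ` an injective linear form, `P` holomorphic near `0`, not identically zero,
`P(0) = 0`, with `ℓ`-minimal Taylor exponent `a`, every `f` holomorphic near `0` admits a
uniformly convergent expansion `f = Σ g_n·P^n` on some polydisk `D(0;ρ)`, where each `g_n`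
is bounded holomorphic with Taylor coefficients supported off `a + ℕ^d`. -/
theorem convergent_expansion_in_powers_of_P
    (d : ℕ) (hd : 1 ≤ d) (ℓ : Fin d → ℝ) (hℓpos : ∀ j, 0 < ℓ j)
    (hℓinj : Function.Injective fun β : Fin d → ℕ => ∑ j, ℓ j * (β j : ℝ))
    (r0 : ℝ) (hr0 : 0 < r0)
    (P : (Fin d → ℂ) → ℂ) (hP : AnalyticOnNhd ℂ P (polydisk d r0))
    (hPne : ∃ x ∈ polydisk d r0, P x ≠ 0) (hP0 : P 0 = 0)
    (a : Fin d → ℕ)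
    (ha : mixedPartial a P 0 ≠ 0)
    (hamin : ∀ β : Fin d → ℕ, mixedPartial β P 0 ≠ 0 → β ≠ a →
      ∑ j, ℓ j * (a j : ℝ) < ∑ j, ℓ j * (β j : ℝ))
    (r1 : ℝ) (hr1 : 0 < r1)
    (f : (Fin d → ℂ) → ℂ) (hf : AnalyticOnNhd ℂ f (polydisk d r1)) :
    ∃ ρ > 0, ρ ≤ r0 ∧ ρ ≤ r1 ∧
      ∃ g : ℕ → (Fin d → ℂ) → ℂ,
        (∀ n, AnalyticOnNhd ℂ (g n) (polydisk d ρ)) ∧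
        (∀ n, ∃ M, ∀ x ∈ polydisk d ρ, ‖g n x‖ ≤ M) ∧
        (∀ n, ∀ β : Fin d → ℕ, (∀ j, a j ≤ β j) → mixedPartial β (g n) 0 = 0) ∧
        TendstoUniformlyOn (fun N x => ∑ n ∈ Finset.range N, g n x * P x ^ n) f
          Filter.atTop (polydisk d ρ) := by
  classical
  have h0P : (0 : Fin d → ℂ) ∈ polydisk d r0 := by intro j; simpa using hr0
  have h0f : (0 : Fin d → ℂ) ∈ polydisk d r1 := by intro j; simpa using hr1
  obtain ⟨hp, sP, HP⟩ := exists_hasExp P (hP 0 h0P)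
  obtain ⟨hq, sf, Hf⟩ := exists_hasExp f (hf 0 h0f)
  have hpa : hp a ≠ 0 := by
    obtain ⟨C, hC, hC1⟩ := HP.mixed a
    intro h
    rw [h, mul_zero] at hC1
    exact ha hC1
  have hmin : ∀ β : Fin d → ℕ, hp β ≠ 0 → β ≠ a →
      ∑ j, ℓ j * (a j : ℝ) < ∑ j, ℓ j * (β j : ℝ) := by
    intro β hβ hne
    obtain ⟨C, hC, hC1⟩ := HP.mixed β
    exact hamin β (by rw [hC1]; exact mul_ne_zero hC hβ) hne
  obtain ⟨t, ht, htP, htf, htsum⟩ := choose_t ℓ hℓpos sP HP.1 hp HP.2.1 a hpa hmin sf Hf.1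
  set r : Fin d → ℝ := fun j => t ^ ℓ j with hrdef
  have hr : ∀ j, 0 < r j := fun j => Real.rpow_pos_of_pos ht _
  have hrn : ∀ (h : (Fin d → ℕ) → ℂ) β, ‖h β * ((∏ j, r j ^ β j : ℝ) : ℂ)‖
      = ‖h β‖ * ∏ j, (t ^ ℓ j) ^ β j := by
    intro h β
    rw [norm_mul, Complex.norm_real, Real.norm_of_nonneg
      (Finset.prod_pos fun j _ => pow_pos (hr j) _).le]
  obtain ⟨p, hpp⟩ := L1.exists_of_summable (fun β => hp β * ((∏ j, r j ^ β j : ℝ) : ℂ))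
    ((summable_weights ℓ t sP ht htP hp HP.2.1).congr fun β => (hrn hp β).symm)
  obtain ⟨c, hcc⟩ := L1.exists_of_summable (fun β => hq β * ((∏ j, r j ^ β j : ℝ) : ℂ))
    ((summable_weights ℓ t sf ht htf hq Hf.2.1).congr fun β => (hrn hq β).symm)
  have hsmall : ‖p - p a • L1.e a‖ < ‖p a‖ := by
    rw [← (L1.hasSum_norm' (p - p a • L1.e a)).tsum_eq]
    have h1 : ∀ β, ‖(p - p a • L1.e a) β‖ = (if β = a then 0 else ‖hp β‖ *
        t ^ (∑ j, ℓ j * (β j : ℝ) - ∑ j, ℓ j * (a j : ℝ))) * t ^ (∑ j, ℓ j * (a j : ℝ)) := by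
      intro β
      have h2 : (p - p a • L1.e a) β = p β - p a * L1.e a β := rfl
      rw [h2, L1.e_apply]
      by_cases hβ : β = a
      · simp [hβ]
      · simp only [hβ, if_false, mul_zero, sub_zero]
        rw [hpp, hrn, weights ℓ t ht, mul_assoc, ← Real.rpow_add ht, sub_add_cancel]
    simp only [h1]
    rw [tsum_mul_right, hpp, hrn, weights ℓ t ht]
    exact mul_lt_mul_of_pos_right htsum (Real.rpow_pos_of_pos ht _)
  obtain ⟨G, K, hK, hG, hexp⟩ := L1.expansion a p hsmall c
  have hPc : ∀ᶠ x in nhds (0 : Fin d → ℂ), ‖P x‖ < 1 / (2 * (K + 1)) := by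
    have h1 : Filter.Tendsto (fun x => ‖P x‖) (nhds 0) (nhds ‖P 0‖) :=
      (hP 0 h0P).continuousAt.norm
    rw [hP0, norm_zero] at h1
    exact h1.eventually (gt_mem_nhds (by positivity))
  obtain ⟨δ, hδ, hδP⟩ := Metric.eventually_nhds_iff.1 hPc
  have hle : ∀ u : ℝ, 0 < u → ∀ᶠ ρ : ℝ in nhdsWithin 0 (Set.Ioi 0), ρ ≤ u := fun u hu =>
    ((gt_mem_nhds hu).filter_mono nhdsWithin_le_nhds).mono fun _ h => le_of_lt h
  have hposev : ∀ᶠ ρ : ℝ in nhdsWithin 0 (Set.Ioi 0), 0 < ρ := self_mem_nhdsWithin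
  obtain ⟨ρ, hρ, hρ0, hρ1, hρP, hρf, hρδ, hρr⟩ := (hposev.and ((hle r0 hr0).and
    ((hle r1 hr1).and ((hle sP HP.1).and ((hle sf Hf.1).and ((hle δ hδ).and
    (Filter.eventually_all.2 fun j => hle (r j) (hr j)))))))).exists
  have hE := fun n => hasExp_ev r hr (G n) ρ hρ hρr
  have hy : ∀ x ∈ polydisk d ρ, ∀ j, ‖x j / (r j : ℂ)‖ ≤ 1 := by
    intro x hx j
    rw [norm_div, Complex.norm_real, Real.norm_of_nonneg (hr j).le, div_le_one (hr j)]
    exact (hx j).le.trans (hρr j)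
  refine ⟨ρ, hρ, hρ0, hρ1, fun n x => ∑' β, G n β * ∏ j, (x j / (r j : ℂ)) ^ β j, ?_, ?_, ?_, ?_⟩
  · intro n
    rw [polydisk_eq ρ hρ]
    exact (hE n).analytic
  · intro n
    refine ⟨‖G n‖, fun x hx => ?_⟩
    have := (L1.ev _ (hy x hx)).le_of_opNorm_le (L1.lift_norm _ _ zero_le_one _) (G n)
    rw [one_mul] at this
    exact this
  · intro n β hβ
    obtain ⟨C, -, hC1⟩ := (hE n).mixed β
    rw [hC1, hG n β hβ, zero_div, mul_zero]
  · rw [Metric.tendstoUniformlyOn_iff]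
    intro ε hε
    have hgeo : Filter.Tendsto (fun N : ℕ => ‖c‖ * (1 / 2 : ℝ) ^ N) Filter.atTop (nhds 0) := by
      have := (tendsto_pow_atTop_nhds_zero_of_lt_one (r := (1 / 2 : ℝ)) (by norm_num)
        (by norm_num)).const_mul ‖c‖
      simpa using this
    filter_upwards [hgeo.eventually (gt_mem_nhds hε)] with N hN
    intro x hx
    have hxn : ‖x‖ < ρ := by
      rw [polydisk_eq ρ hρ] at hx
      simpa using hx
    have e1 := ev_eq HP r hr p hpp x (hxn.trans_le hρP) (hy x hx)
    have e2 := ev_eq Hf r hr c hcc x (hxn.trans_le hρf) (hy x hx)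
    have h1 := hexp _ (hy x hx) N
    rw [e1, e2] at h1
    rw [dist_eq_norm]
    refine lt_of_le_of_lt h1 (lt_of_le_of_lt ?_ hN)
    have hPx : ‖P x‖ < 1 / (2 * (K + 1)) := hδP (by
      rw [dist_zero_right]
      exact hxn.trans_le hρδ)
    have h2 : ‖P x‖ * K ≤ 1 / 2 := by
      calc ‖P x‖ * K ≤ 1 / (2 * (K + 1)) * (K + 1) := by
            gcongr
            linarith
        _ = 1 / 2 := by field_simp
    gcongr
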